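/- arXiv:1801.09590 — 2 statements merged into one kernel-verified Lean document; each statement's English description precedes it below -/
import Mathlib

section
/- Let L be an even positive-definite lattice of rank n₀ ≥ 1 and let ψ(τ,z) = Σ_{n,l} a(n,l) qⁿ ζ^l be a weakly holomorphic Jacobi form of weight k ∈ ℤ and index L. Then the function H_k(ψ) := H(ψ) + (2k − n₀)·G₂(τ)·ψ(τ,z) is a weakly holomorphic Jacobi form of weight k+2 and index L, where H(ψ)(τ,z) = (1/2) Σ_{n,l} (2n − (l,l)) a(n,l) qⁿ ζ^l and G₂(τ) = −1/24 + Σ_{n≥1} σ(n) qⁿ, with σ(n) the sum of the positive divisors of n. -/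
/-!
The function `H(ψ)` is the image of `ψ` under the heat operator
`(1/2πi) (∂_τ - (1/4πi) Δ)`. To see this, the Fourier series is differentiated termwise
(`expSeries_hasFDerivAt`): a series of exponentials with real frequencies that converges on an open
set converges fast enough there to dominate its derivatives. A rational orthogonal basis `v` of
`L ⊗ ℚ` (`EvenLattice.exists_orthogonal`) turns the Laplacian of the inverse Gram matrix into
`∑ a, c a ∂_{v a}²`, so only derivatives along lines are needed.

Differentiating the elliptic law shows that `H` commutes with elliptic transformations
(`WeakJacobiForm.heat_elliptic`). Differentiating the modular law with automorphy factor
`J = cτ + d` (`WeakJacobiForm.heat_modular`), the terms with `(z, z)` and with first derivatives in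
`z` cancel between `∂_τ` and `Δ`. What remains is `H(ψ)` transformed with weight `k + 2` plus
`(2k - n) c / (4πi J)` times `ψ`, also carrying the factor of automorphy of weight `k + 2`. The
contribution `k` comes from the derivative of `J ^ k`, and `n` from the trace of the form against
its inverse. Since `G₂ = -E₂ / 24` satisfies `G₂(γτ) = J² G₂(τ) - c J / (4πi)` (`G2_modular`),
adding `(2k - n) G₂ ψ` removes this anomaly.

The Fourier expansion of `G₂ ψ` is a Cauchy product whose coefficients are finite sums because the
`q`-exponents of `ψ` are bounded below (`WeakJacobiForm.g2Mul_hasSum`). Holomorphy of `H_k(ψ)`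
then follows from termwise differentiation of its own Fourier series.
-/

noncomputable section

open Matrix Complex

/-- The complex upper half-plane, as a subset of `ℂ`. -/
def UH : Set ℂ := {τ : ℂ | 0 < τ.im}

/-- An even positive-definite lattice of rank `n`, presented through its Gram matrix:
the underlying free `ℤ`-module is `Fin n → ℤ`, the bilinear form is
`(x, y) = x ⬝ᵥ (G *ᵥ y)`. -/
structure EvenLattice (n : ℕ) where
  /-- the Gram matrix -/
  G : Matrix (Fin n) (Fin n) ℤ
  symm : G.IsSymm
  even_diag : ∀ i, 2 ∣ G i i
  posdef : ∀ x : Fin n → ℤ, x ≠ 0 → 0 < x ⬝ᵥ (G *ᵥ x)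

namespace EvenLattice

variable {n : ℕ}

/-- The bilinear form, extended `ℚ`-bilinearly to `L ⊗ ℚ = Fin n → ℚ`. -/
def bq (L : EvenLattice n) (x y : Fin n → ℚ) : ℚ :=
  x ⬝ᵥ ((L.G.map (Int.cast : ℤ → ℚ)) *ᵥ y)

/-- The bilinear form, extended `ℂ`-bilinearly to `L ⊗ ℂ = Fin n → ℂ`. -/
def bc (L : EvenLattice n) (x y : Fin n → ℂ) : ℂ :=
  x ⬝ᵥ ((L.G.map (Int.cast : ℤ → ℂ)) *ᵥ y)

/-- `x ∈ L ⊗ ℚ` is a lattice vector, i.e. has integral coordinates. -/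
def IsIntVec (L : EvenLattice n) (x : Fin n → ℚ) : Prop := ∀ i, ∃ m : ℤ, x i = m

/-- `x` lies in the dual lattice `L^∨`. -/
def InDual (L : EvenLattice n) (x : Fin n → ℚ) : Prop :=
  ∀ l : Fin n → ℚ, L.IsIntVec l → ∃ m : ℤ, L.bq x l = m

/-- `L` is unimodular, i.e. `L^∨ = L`. -/
def Unimodular (L : EvenLattice n) : Prop :=
  ∀ x : Fin n → ℚ, L.InDual x → L.IsIntVec x

/-- The number `|R(L)|` of `2`-roots of `L`, i.e. of vectors `r ∈ L` with `(r,r) = 2`. -/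
def rootCount (L : EvenLattice n) : ℕ :=
  Nat.card {r : Fin n → ℚ // L.IsIntVec r ∧ L.bq r r = 2}

end EvenLattice

/-- A weakly holomorphic Jacobi form of weight `k` and index `L`, recorded together with the
system of its Fourier coefficients `coef`. -/
structure WeakJacobiForm {n : ℕ} (L : EvenLattice n) (k : ℤ) where
  /-- the underlying function on `ℍ × (L ⊗ ℂ)` -/
  toFun : ℂ → (Fin n → ℂ) → ℂ
  /-- the Fourier coefficients `f(n, l)` -/
  coef : ℤ → (Fin n → ℚ) → ℂ
  holo : DifferentiableOn ℂ (fun p : ℂ × (Fin n → ℂ) => toFun p.1 p.2)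
    (UH ×ˢ (Set.univ : Set (Fin n → ℂ)))
  modular : ∀ a b c d : ℤ, a * d - b * c = 1 → ∀ τ ∈ UH, ∀ z : Fin n → ℂ,
    toFun (((a : ℂ) * τ + b) / ((c : ℂ) * τ + d)) (fun i => z i / ((c : ℂ) * τ + d)) =
      ((c : ℂ) * τ + d) ^ k *
        Complex.exp ((Real.pi : ℂ) * Complex.I * c * L.bc z z / ((c : ℂ) * τ + d)) * toFun τ z
  elliptic : ∀ x y : Fin n → ℚ, L.IsIntVec x → L.IsIntVec y → ∀ τ ∈ UH, ∀ z : Fin n → ℂ,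
    toFun τ (fun i => z i + (x i : ℂ) * τ + (y i : ℂ)) =
      Complex.exp (-((Real.pi : ℂ) * Complex.I) *
        ((L.bq x x : ℂ) * τ + 2 * L.bc (fun i => (x i : ℂ)) z)) * toFun τ z
  coef_bdd : ∃ n₁ : ℤ, ∀ m : ℤ, ∀ l : Fin n → ℚ, m < n₁ → coef m l = 0
  coef_dual : ∀ (m : ℤ) (l : Fin n → ℚ), coef m l ≠ 0 → L.InDual l
  coef_finite : ∀ m : ℤ, {l : Fin n → ℚ | coef m l ≠ 0}.Finite
  expansion : ∀ τ ∈ UH, ∀ z : Fin n → ℂ,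
    HasSum (fun p : ℤ × (Fin n → ℚ) =>
      coef p.1 p.2 * Complex.exp (2 * (Real.pi : ℂ) * Complex.I *
        ((p.1 : ℂ) * τ + L.bc (fun i => (p.2 i : ℂ)) z))) (toFun τ z)

/-- The Eisenstein series `G₂(τ) = −1/24 + Σ_{n≥1} σ(n) qⁿ`, where `σ(n)` is the sum of the
positive divisors of `n`. -/
def G2 (τ : ℂ) : ℂ :=
  -(1 / 24) + ∑' m : ℕ, (∑ d ∈ Nat.divisors (m + 1), (d : ℂ)) *
    Complex.exp (2 * (Real.pi : ℂ) * Complex.I * ((m : ℂ) + 1) * τ)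

/-! ### Differentiation of Gaussian transforms and of exponential series -/

/-- First and second derivatives at `0` of the identity `P s = K exp(A + B s + C s²) Q(J s)`. Both
transformation laws of a Jacobi form, restricted to a line in `L ⊗ ℂ`, have this shape. -/
lemma gauss_deriv {P P1 Q Q1 : ℂ → ℂ} {P2 Q2 K A B C J : ℂ}
    (hP : ∀ s, HasDerivAt P (P1 s) s) (hP1 : HasDerivAt P1 P2 0)
    (hQ : ∀ s, HasDerivAt Q (Q1 s) s) (hQ1 : HasDerivAt Q1 Q2 0)
    (h : ∀ s, P s = K * cexp (A + B * s + C * s ^ 2) * Q (J * s)) :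
    P1 0 = K * cexp A * (B * Q 0 + J * Q1 0) ∧
    P2 = K * cexp A * ((B ^ 2 + 2 * C) * Q 0 + 2 * B * J * Q1 0 + J ^ 2 * Q2) := by
  have hJ : ∀ s : ℂ, HasDerivAt (fun s : ℂ => J * s) J s := fun s => by
    simpa using (hasDerivAt_id s).const_mul J
  have hpoly : ∀ s : ℂ, HasDerivAt (fun s : ℂ => A + B * s + C * s ^ 2) (B + 2 * C * s) s := by
    intro s
    have := (((hasDerivAt_id s).const_mul B).const_add A).add
      (((hasDerivAt_id s).pow 2).const_mul C)
    refine this.congr_deriv ?_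
    simp; ring
  have hQJ : ∀ s, HasDerivAt (fun s => Q (J * s)) (Q1 (J * s) * J) s := fun s =>
    (hQ (J * s)).comp s (hJ s)
  have hPeq : P = fun s => K * cexp (A + B * s + C * s ^ 2) * Q (J * s) := funext h
  have hP1eq : P1 = fun s => K * cexp (A + B * s + C * s ^ 2) *
      ((B + 2 * C * s) * Q (J * s) + Q1 (J * s) * J) := by
    funext s
    have := (((hpoly s).cexp.const_mul K).mul (hQJ s))
    refine (hP s).unique (hPeq ▸ this.congr_deriv ?_)
    ring
  refine ⟨by rw [hP1eq]; simp [-mul_eq_mul_left_iff]; ring, ?_⟩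
  have hQ1J : HasDerivAt (fun s => Q1 (J * s)) (Q2 * J) 0 :=
    HasDerivAt.comp 0 (h₂ := Q1) (by simpa using hQ1) (hJ 0)
  have hlin : HasDerivAt (fun s : ℂ => B + 2 * C * s) (2 * C) 0 := by
    simpa using ((hasDerivAt_id (0 : ℂ)).const_mul (2 * C)).const_add B
  have := ((hpoly 0).cexp.const_mul K).mul ((hlin.mul (hQJ 0)).add (hQ1J.mul_const J))
  rw [hP1eq] at hP1
  rw [hP1.unique this]
  simp [-mul_eq_mul_left_iff]; ring

lemma hasSum_of_eq {ι : Type*} {f g : ι → ℂ} {a : ℂ} (h : HasSum f a) (e : ∀ i, f i = g i) :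
    HasSum g a := (funext e : f = g) ▸ h

lemma hasSum_mul {ι κ : Type*} {f : ι → ℂ} {g : κ → ℂ} {a b : ℂ} (hf : HasSum f a)
    (hg : HasSum g b) : HasSum (fun x : ι × κ => f x.1 * g x.2) (a * b) := by
  have h1 : Summable fun i => ‖f i‖ := hf.summable.norm
  have h2 : Summable fun i => ‖g i‖ := hg.summable.norm
  exact hf.mul hg (summable_mul_of_summable_norm h1 h2)

/-- Termwise Fréchet differentiation of an exponential series `∑ b i exp(2πi Λ i p)` that converges
on an open set, where the functionals `Λ i` are real on finitely many directions `d j` and are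
bounded in norm by their values there. Near `p₀` the terms grow by at most a factor
`exp(O(ε) ∑ j, |Λ i (d j)|)`, and this factor is absorbed by the convergence of the series at the
finitely many points `p₀ - 2iε ∑ j, ± d j`; that gives the uniform bound on the derivatives. -/
lemma expSeries_hasFDerivAt {E ι J : Type*} [NormedAddCommGroup E] [NormedSpace ℂ E] [Fintype J]
    (d : J → E) (Λ : ι → E →L[ℂ] ℂ) (ρ : ι → J → ℝ) (hρ : ∀ i j, Λ i (d j) = (ρ i j : ℂ))
    (hΛ : ∀ i, ‖Λ i‖ ≤ ∑ j, |ρ i j|) {Q : Set E} (hQ : IsOpen Q) (b : ι → ℂ) {F : E → ℂ}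
    (hF : ∀ p ∈ Q, HasSum (fun i => b i * cexp (2 * (Real.pi : ℂ) * I * Λ i p)) (F p))
    {p₀ : E} (hp₀ : p₀ ∈ Q) :
    ∃ f' : E →L[ℂ] ℂ, HasFDerivAt F f' p₀ ∧
      ∀ v, HasSum (fun i => 2 * (Real.pi : ℂ) * I * Λ i v * b i *
        cexp (2 * (Real.pi : ℂ) * I * Λ i p₀)) (f' v) := by
  classical
  -- a radius `ε` for which the ball and all the corners `p₀ - 2 i ε ∑ θ_j d_j` lie in `Q`
  obtain ⟨ε, hε, hball, hcorner⟩ : ∃ ε : ℝ, 0 < ε ∧ Metric.ball p₀ ε ⊆ Q ∧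
      ∀ θ : J → ℤˣ, p₀ - (2 * I * ε) • ∑ j, ((θ j : ℤ) : ℂ) • d j ∈ Q := by
    have h1 : ∀ᶠ ε : ℝ in nhdsWithin 0 (Set.Ioi 0), Metric.ball p₀ ε ⊆ Q := by
      obtain ⟨δ, hδ, h⟩ := Metric.isOpen_iff.1 hQ p₀ hp₀
      filter_upwards [Ioo_mem_nhdsGT hδ] with ε he
      exact (Metric.ball_subset_ball he.2.le).trans h
    have h2 : ∀ᶠ ε : ℝ in nhdsWithin 0 (Set.Ioi 0), ∀ θ : J → ℤˣ,
        p₀ - (2 * I * ε) • ∑ j, ((θ j : ℤ) : ℂ) • d j ∈ Q := by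
      rw [Filter.eventually_all]
      intro θ
      have hc : Continuous fun ε : ℝ => p₀ - (2 * I * (ε : ℂ)) • ∑ j, ((θ j : ℤ) : ℂ) • d j := by
        fun_prop
      have := hc.continuousAt.preimage_mem_nhds (x := 0) (t := Q)
        (hQ.mem_nhds (by simpa using hp₀))
      exact nhdsWithin_le_nhds this
    obtain ⟨ε, ⟨h1, h2⟩, h3⟩ := ((h1.and h2).and self_mem_nhdsWithin).exists
    exact ⟨ε, h3, h1, h2⟩
  set A : ι → ℝ := fun i => ‖b i * cexp (2 * (Real.pi : ℂ) * I * Λ i p₀)‖ with hA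
  set S : ι → ℝ := fun i => ∑ j, |ρ i j| with hS
  have hS0 : ∀ i, 0 ≤ S i := fun i => Finset.sum_nonneg fun j _ => abs_nonneg _
  -- `exp (4πε ∑ |ρ_j|)` is one of the summands over all choices of signs
  have hsum : Summable fun i => A i * Real.exp (4 * Real.pi * ε * S i) := by
    have h1 : Summable fun i => ∑ θ : J → ℤˣ, ‖b i * cexp (2 * (Real.pi : ℂ) * I *
        Λ i (p₀ - (2 * I * ε) • ∑ j, ((θ j : ℤ) : ℂ) • d j))‖ :=
      summable_sum fun θ _ => (hF _ (hcorner θ)).summable.norm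
    refine h1.of_nonneg_of_le (fun i => by positivity) fun i => ?_
    let θ : J → ℤˣ := fun j => if 0 ≤ ρ i j then 1 else -1
    refine le_trans (le_of_eq ?_) (Finset.single_le_sum (fun θ _ => norm_nonneg _)
      (Finset.mem_univ θ))
    have hθ : ∑ j, ((θ j : ℤ) : ℂ) * (ρ i j : ℂ) = (S i : ℂ) := by
      rw [hS]; push_cast
      refine Finset.sum_congr rfl fun j _ => ?_
      by_cases h : 0 ≤ ρ i j
      · simp [θ, h, abs_of_nonneg h]
      · simp [θ, h, abs_of_neg (not_le.1 h)]
    have : 2 * (Real.pi : ℂ) * I * Λ i (p₀ - (2 * I * ε) • ∑ j, ((θ j : ℤ) : ℂ) • d j)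
        = 2 * (Real.pi : ℂ) * I * Λ i p₀ + ((4 * Real.pi * ε * S i : ℝ) : ℂ) := by
      simp only [map_sub, map_smul, map_sum, hρ, smul_eq_mul, hθ]
      push_cast
      linear_combination (-4 * Real.pi * ε * S i : ℂ) * I_sq
    rw [this, Complex.exp_add, ← mul_assoc, norm_mul, ← Complex.ofReal_exp, Complex.norm_real,
      Real.norm_of_nonneg (Real.exp_pos _).le]
  have hterm : ∀ i p, HasFDerivAt (fun p => b i * cexp (2 * (Real.pi : ℂ) * I * Λ i p))
      ((b i * cexp (2 * (Real.pi : ℂ) * I * Λ i p) * (2 * (Real.pi : ℂ) * I)) • Λ i) p := by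
    intro i p
    have := ((((Λ i).hasFDerivAt (x := p)).const_mul (2 * (Real.pi : ℂ) * I)).cexp).const_mul (b i)
    refine this.congr_fderiv ?_
    ext v; simp; ring
  have hbound : ∀ i, ∀ p ∈ Metric.ball p₀ ε,
      ‖(b i * cexp (2 * (Real.pi : ℂ) * I * Λ i p) * (2 * (Real.pi : ℂ) * I)) • Λ i‖ ≤
        ε⁻¹ * (A i * Real.exp (4 * Real.pi * ε * S i)) := by
    intro i p hp
    have hp' : ‖p - p₀‖ ≤ ε := by rw [← dist_eq_norm]; exact (Metric.mem_ball.1 hp).le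
    have e1 : ‖b i * cexp (2 * (Real.pi : ℂ) * I * Λ i p)‖ ≤
        A i * Real.exp (2 * Real.pi * ε * S i) := by
      have : 2 * (Real.pi : ℂ) * I * Λ i p = 2 * (Real.pi : ℂ) * I * Λ i p₀ +
          2 * (Real.pi : ℂ) * I * Λ i (p - p₀) := by rw [map_sub]; ring
      rw [this, Complex.exp_add, ← mul_assoc, norm_mul]
      refine mul_le_mul_of_nonneg_left ?_ (norm_nonneg _)
      refine (Complex.norm_exp_le_exp_norm _).trans (Real.exp_le_exp.2 ?_)
      have h1 : ‖Λ i (p - p₀)‖ ≤ S i * ε :=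
        ((Λ i).le_opNorm _).trans (mul_le_mul (hΛ i) hp' (norm_nonneg _) (hS0 i))
      have h2 : ‖2 * (Real.pi : ℂ) * I‖ = 2 * Real.pi := by
        simp [abs_of_pos Real.pi_pos]
      rw [norm_mul, h2]
      nlinarith [Real.pi_pos]
    have e2 : 2 * Real.pi * S i ≤ ε⁻¹ * Real.exp (2 * Real.pi * ε * S i) := by
      have := Real.add_one_le_exp (2 * Real.pi * ε * S i)
      rw [le_inv_mul_iff₀ hε]; nlinarith
    have h2 : ‖2 * (Real.pi : ℂ) * I‖ = 2 * Real.pi := by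
      simp [abs_of_pos Real.pi_pos]
    rw [norm_smul, norm_mul, h2]
    calc _ ≤ A i * Real.exp (2 * Real.pi * ε * S i) * (2 * Real.pi) * S i := by
          gcongr; exact hΛ i
      _ = A i * Real.exp (2 * Real.pi * ε * S i) * (2 * Real.pi * S i) := by ring
      _ ≤ A i * Real.exp (2 * Real.pi * ε * S i) * (ε⁻¹ * Real.exp (2 * Real.pi * ε * S i)) := by
          gcongr
      _ = ε⁻¹ * (A i * (Real.exp (2 * Real.pi * ε * S i) * Real.exp (2 * Real.pi * ε * S i))) := by
          ring
      _ = _ := by rw [← Real.exp_add]; ring_nf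
  have hu := hsum.mul_left ε⁻¹
  have key := hasFDerivAt_tsum_of_isPreconnected (𝕜 := ℂ) hu Metric.isOpen_ball
    (convex_ball p₀ ε).isPreconnected (fun i p _ => hterm i p) hbound (Metric.mem_ball_self hε)
    (hF p₀ hp₀).summable (Metric.mem_ball_self hε)
  refine ⟨_, key.congr_of_eventuallyEq ?_, fun v => ?_⟩
  · filter_upwards [Metric.ball_mem_nhds p₀ hε] with p hp
    exact (hF p (hball hp)).tsum_eq.symm
  · have h1 := (Summable.of_norm_bounded hu
      (fun i => hbound i p₀ (Metric.mem_ball_self hε))).hasSum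
    have h2 := (ContinuousLinearMap.apply ℂ ℂ v).hasSum h1
    refine hasSum_of_eq h2 fun i => ?_
    simp; ring

/-! ### The Eisenstein series `G₂` -/

/-- The coefficients of `G₂`. -/
def g2coef (m : ℕ) : ℂ := if m = 0 then -(1 / 24) else ∑ d ∈ m.divisors, (d : ℂ)

lemma G2_hasSum' (τ : UpperHalfPlane) :
    HasSum (fun m : ℕ => g2coef m * cexp (2 * (Real.pi : ℂ) * I * ((m : ℂ) * (τ : ℂ))))
      (-(1 / 24) * EisensteinSeries.E2 τ) := by
  have h := (EisensteinSeries.hasSum_qExpansion_E2 τ).mul_left (-(1 / 24) : ℂ)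
  refine hasSum_of_eq h fun m => ?_
  rw [← Complex.exp_nat_mul, smul_eq_mul, ← mul_assoc]
  congr 1
  · by_cases hm : m = 0
    · simp [hm, g2coef]
    · simp [hm, g2coef, ArithmeticFunction.sigma_one_apply]
  · congr 1; ring

/-- `G₂` is `-1/24` times Mathlib's Eisenstein series `E₂`. -/
lemma G2_eq_E2 (τ : UpperHalfPlane) : G2 (τ : ℂ) = -(1 / 24) * EisensteinSeries.E2 τ := by
  rw [← (G2_hasSum' τ).tsum_eq, (G2_hasSum' τ).summable.tsum_eq_zero_add, G2]
  congr 1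
  · simp [g2coef]
  · refine tsum_congr fun m => ?_
    simp [g2coef, mul_assoc]

lemma G2_hasSum {τ : ℂ} (hτ : τ ∈ UH) :
    HasSum (fun m : ℕ => g2coef m * cexp (2 * (Real.pi : ℂ) * I * ((m : ℂ) * τ))) (G2 τ) := by
  have := G2_hasSum' ⟨τ, hτ⟩
  rwa [← G2_eq_E2] at this

lemma moebius_denom_ne {c d : ℤ} (h : c ≠ 0 ∨ d ≠ 0) {τ : ℂ} (hτ : τ ∈ UH) :
    (c : ℂ) * τ + d ≠ 0 := by
  intro h0
  have him := congrArg Complex.im h0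
  have hre := congrArg Complex.re h0
  have hτ' : τ.im ≠ 0 := ne_of_gt hτ
  simp [hτ'] at him
  simp [him] at hre
  simp_all

/-- Möbius transformations preserve `ℍ`, and `G₂` is quasi-modular of weight `2`. -/
lemma G2_modular {a b c d : ℤ} (h : a * d - b * c = 1) {τ : ℂ} (hτ : τ ∈ UH) :
    ((a : ℂ) * τ + b) / ((c : ℂ) * τ + d) ∈ UH ∧
    G2 (((a : ℂ) * τ + b) / ((c : ℂ) * τ + d)) =
      ((c : ℂ) * τ + d) ^ 2 * G2 τ - c * ((c : ℂ) * τ + d) / (4 * Real.pi * I) := by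
  let γ : Matrix.SpecialLinearGroup (Fin 2) ℤ := ⟨!![a, b; c, d], by simp [Matrix.det_fin_two, h]⟩
  let t : UpperHalfPlane := ⟨τ, hτ⟩
  have hJ : (c : ℂ) * τ + d ≠ 0 := by
    refine moebius_denom_ne ?_ hτ
    by_contra! hc
    simp [hc.1, hc.2] at h
  have hsmul : ((γ • t : UpperHalfPlane) : ℂ) = ((a : ℂ) * τ + b) / ((c : ℂ) * τ + d) := by
    rw [UpperHalfPlane.coe_specialLinearGroup_apply]
    simp [γ, t]
  have hden : UpperHalfPlane.denom γ t = (c : ℂ) * τ + d := by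
    rw [ModularGroup.denom_apply]; rfl
  have hE := congrFun (EisensteinSeries.E2_slash_action γ) t
  rw [ModularForm.SL_slash_apply] at hE
  simp only [Pi.sub_apply, Pi.smul_apply, EisensteinSeries.D2, hden, riemannZeta_two,
    smul_eq_mul] at hE
  refine ⟨hsmul ▸ (γ • t).2, ?_⟩
  have hGt : G2 τ = _ := G2_eq_E2 t
  rw [← hsmul, G2_eq_E2, hGt]
  have hγ : (γ 1 0 : ℤ) = c := rfl
  rw [hγ] at hE
  have hE' : EisensteinSeries.E2 (γ • t) = ((c : ℂ) * τ + d) ^ 2 *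
      (EisensteinSeries.E2 t - 1 / (2 * ((Real.pi : ℂ) ^ 2 / 6)) *
        (2 * Real.pi * I * c / ((c : ℂ) * τ + d))) := by
    rw [← hE, _root_.zpow_neg]
    field_simp
  rw [hE']
  have hpi : (Real.pi : ℂ) ≠ 0 := by exact_mod_cast Real.pi_ne_zero
  field_simp
  linear_combination (24 * c : ℂ) * I_sq

/-! ### The bilinear form and orthogonal bases -/

namespace EvenLattice

variable {n : ℕ} (L : EvenLattice n)

lemma bc_comm (x y : Fin n → ℂ) : L.bc x y = L.bc y x := by
  have hs : (L.G.map (Int.cast : ℤ → ℂ))ᵀ = L.G.map (Int.cast : ℤ → ℂ) := by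
    rw [← Matrix.transpose_map, L.symm]
  rw [bc, bc, dotProduct_mulVec, ← mulVec_transpose, hs, dotProduct_comm]

lemma bc_add_right (x y z : Fin n → ℂ) : L.bc x (y + z) = L.bc x y + L.bc x z := by
  simp [bc, mulVec_add, dotProduct_add]

lemma bc_smul_right (r : ℂ) (x y : Fin n → ℂ) : L.bc x (r • y) = r * L.bc x y := by
  simp [bc, mulVec_smul, dotProduct_smul]

lemma bc_add_left (x y z : Fin n → ℂ) : L.bc (x + y) z = L.bc x z + L.bc y z := by
  simp [bc, add_dotProduct]

lemma bc_smul_left (r : ℂ) (x y : Fin n → ℂ) : L.bc (r • x) y = r * L.bc x y := by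
  simp [bc, smul_dotProduct]

lemma bc_cast (x y : Fin n → ℚ) :
    L.bc (fun i => (x i : ℂ)) (fun i => (y i : ℂ)) = (L.bq x y : ℂ) := by
  simp [bc, bq, dotProduct, mulVec]

lemma bc_sum_right {ι : Type*} (s : Finset ι) (x : Fin n → ℂ) (y : ι → Fin n → ℂ) :
    L.bc x (∑ i ∈ s, y i) = ∑ i ∈ s, L.bc x (y i) := by
  classical
  induction s using Finset.induction_on with
  | empty => simp [bc]
  | insert a s ha ih => rw [Finset.sum_insert ha, Finset.sum_insert ha, bc_add_right, ih]

/-- The form is anisotropic over `ℚ`, by scaling to a lattice vector. -/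
lemma bq_self_ne_zero {x : Fin n → ℚ} (hx : x ≠ 0) : L.bq x x ≠ 0 := by
  -- clear denominators
  obtain ⟨N, hN⟩ := IsLocalization.exist_integer_multiples_of_finite (nonZeroDivisors ℤ) x
  choose y hy using hN
  have hN0 : ((N : ℤ) : ℚ) ≠ 0 := by exact_mod_cast nonZeroDivisors.coe_ne_zero N
  have hy' : ∀ i, (y i : ℚ) = (N : ℤ) * x i := fun i => by simpa using hy i
  have hy0 : y ≠ 0 := by
    rintro rfl
    refine hx (funext fun i => ?_)
    simpa [hN0] using hy' i
  have h := (L.posdef y hy0).ne'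
  have e : ((y ⬝ᵥ (L.G *ᵥ y) : ℤ) : ℚ) = ((N : ℤ) : ℚ) ^ 2 * L.bq x x := by
    have hy2 : (fun i => (y i : ℚ)) = ((N : ℤ) : ℚ) • x := by ext i; simp [hy']
    have : ((y ⬝ᵥ (L.G *ᵥ y) : ℤ) : ℚ) = L.bq (fun i => (y i : ℚ)) (fun i => (y i : ℚ)) := by
      simp [bq, dotProduct, mulVec]
    rw [this, hy2]
    simp [bq, mulVec_smul, dotProduct_smul, smul_dotProduct]
    ring
  intro h0
  rw [h0, mul_zero] at e
  exact h (by exact_mod_cast e)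

/-- `v` is a rational orthogonal basis and `c a = (v a, v a)⁻¹`, so that
`∑ a, c a • v a ⊗ v a` is the inverse Gram matrix. The expansion of vectors in this basis is
stated over `ℂ`. -/
structure IsDiag (v : Fin n → Fin n → ℚ) (c : Fin n → ℚ) : Prop where
  norm : ∀ a, c a * L.bq (v a) (v a) = 1
  complete : ∀ z : Fin n → ℂ, ∑ a, ((c a : ℂ) * L.bc z (fun i => (v a i : ℂ))) •
      (fun i => (v a i : ℂ)) = z

/-- A rational orthogonal basis exists. It writes the Laplacian of the inverse Gram matrix as a
combination of second derivatives along single directions. -/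
lemma exists_orthogonal : ∃ (v : Fin n → Fin n → ℚ) (c : Fin n → ℚ), L.IsDiag v c := by
  classical
  have hsq : (L.G.map (Int.cast : ℤ → ℚ))ᵀ = L.G.map (Int.cast : ℤ → ℚ) := by
    rw [← Matrix.transpose_map, L.symm]
  set B : LinearMap.BilinForm ℚ (Fin n → ℚ) := Matrix.toBilin' (L.G.map (Int.cast : ℤ → ℚ))
  have hB : ∀ x y, B x y = L.bq x y := fun x y => Matrix.toBilin'_apply' _ _ _
  have hsymm : LinearMap.IsSymm B := ⟨fun x y => by
    simp only [hB, RingHom.id_apply]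
    rw [bq, bq, dotProduct_mulVec, ← mulVec_transpose, hsq, dotProduct_comm]⟩
  obtain ⟨v', hv'⟩ := LinearMap.BilinForm.exists_orthogonal_basis hsymm
  let v := v'.reindex (finCongr (Module.finrank_fin_fun (R := ℚ) (n := n)))
  have hv : ∀ a b, a ≠ b → L.bq (v a) (v b) = 0 := fun a b hab => by
    rw [← hB]
    simp only [v, Module.Basis.reindex_apply]
    exact hv' (by simpa using hab)
  have hne : ∀ a, L.bq (v a) (v a) ≠ 0 := fun a => L.bq_self_ne_zero (v.ne_zero a)
  have hrat : ∀ x : Fin n → ℚ, ∑ a, ((L.bq (v a) (v a))⁻¹ * L.bq x (v a)) • v a = x := by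
    intro x
    conv_rhs => rw [← v.sum_repr x]
    refine Finset.sum_congr rfl fun a _ => ?_
    congr 1
    have : L.bq x (v a) = v.repr x a * L.bq (v a) (v a) := by
      conv_lhs => rw [← v.sum_repr x, ← hB]
      simp only [map_sum, map_smul, LinearMap.sum_apply, LinearMap.smul_apply, hB]
      rw [Finset.sum_eq_single a (fun b _ hb => by simp [hv b a hb]) (by simp)]
      simp
    rw [this]; field_simp [hne a]
  refine ⟨v, fun a => (L.bq (v a) (v a))⁻¹, fun a => inv_mul_cancel₀ (hne a), fun z => ?_⟩
  -- both sides are linear in `z` and agree on the standard basis, which is rational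
  let T : (Fin n → ℂ) →ₗ[ℂ] (Fin n → ℂ) :=
    { toFun := fun z => ∑ a, ((((L.bq (v a) (v a))⁻¹ : ℚ) : ℂ) * L.bc z (fun i => (v a i : ℂ))) •
        (fun i => (v a i : ℂ))
      map_add' := fun x y => by
        simp only [bc_add_left, mul_add, add_smul, Finset.sum_add_distrib]
      map_smul' := fun r x => by
        simp only [bc_smul_left, RingHom.id_apply, Finset.smul_sum, smul_smul]
        refine Finset.sum_congr rfl fun a _ => ?_
        congr 1; ring }
  have hT : T = LinearMap.id := by
    refine (Pi.basisFun ℂ (Fin n)).ext fun j => ?_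
    have hj : (Pi.basisFun ℂ (Fin n)) j = fun i => (((Pi.single j 1 : Fin n → ℚ) i : ℚ) : ℂ) := by
      ext i
      by_cases h : i = j
      · subst h; simp
      · simp [h]
    rw [hj, LinearMap.id_apply]
    simp only [T, LinearMap.coe_mk, AddHom.coe_mk]
    simp only [bc_cast]
    ext i
    have := congrFun (hrat (Pi.single j 1)) i
    rw [Finset.sum_apply] at this ⊢
    simp only [Pi.smul_apply, smul_eq_mul] at this ⊢
    exact_mod_cast this
  exact LinearMap.congr_fun hT z

end EvenLattice

/-! ### Derivatives of Jacobi forms -/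

namespace EvenLattice

variable {n : ℕ} (L : EvenLattice n)

/-- The linear functional `(τ, z) ↦ m τ + (l, z)` on `ℂ × (L ⊗ ℂ)` attached to `p = (m, l)`. -/
def phase (p : ℤ × (Fin n → ℚ)) : ℂ × (Fin n → ℂ) →L[ℂ] ℂ :=
  LinearMap.toContinuousLinearMap
    { toFun := fun q => (p.1 : ℂ) * q.1 + L.bc (fun i => (p.2 i : ℂ)) q.2
      map_add' := fun x y => by simp [bc_add_right]; ring
      map_smul' := fun r x => by simp [bc_smul_right]; ring }

@[simp] lemma phase_apply (p : ℤ × (Fin n → ℚ)) (q : ℂ × (Fin n → ℂ)) :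
    L.phase p q = (p.1 : ℂ) * q.1 + L.bc (fun i => (p.2 i : ℂ)) q.2 := rfl

lemma isOpen_dom : IsOpen (UH ×ˢ (Set.univ : Set (Fin n → ℂ))) :=
  (isOpen_lt continuous_const Complex.continuous_im).prod isOpen_univ

/-- Termwise differentiation of a convergent Fourier series on `ℍ × (L ⊗ ℂ)`. No growth condition on
the coefficients is needed beyond convergence everywhere. -/
lemma series_fderiv (b : ℤ × (Fin n → ℚ) → ℂ) {F : ℂ × (Fin n → ℂ) → ℂ}
    (hF : ∀ q ∈ UH ×ˢ (Set.univ : Set (Fin n → ℂ)),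
      HasSum (fun p => b p * cexp (2 * (Real.pi : ℂ) * I * L.phase p q)) (F q))
    {q : ℂ × (Fin n → ℂ)} (hq : q ∈ UH ×ˢ (Set.univ : Set (Fin n → ℂ))) :
    HasFDerivAt F (fderiv ℂ F q) q ∧
      ∀ V, HasSum (fun p => 2 * (Real.pi : ℂ) * I * L.phase p V * b p *
        cexp (2 * (Real.pi : ℂ) * I * L.phase p q)) (fderiv ℂ F q V) := by
  classical
  obtain ⟨F', hF', hs⟩ := expSeries_hasFDerivAt (J := Option (Fin n))
    (fun j => j.elim ((1, 0) : ℂ × (Fin n → ℂ)) fun j => (0, Pi.single j 1)) L.phase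
    (fun p j => j.elim (p.1 : ℝ) fun j => ((L.bq p.2 (Pi.single j 1) : ℚ) : ℝ))
    (by
      rintro p (_ | j)
      · simp [bc]
      · have : (Pi.single j 1 : Fin n → ℂ) = fun i => (((Pi.single j 1 : Fin n → ℚ) i : ℚ) : ℂ) := by
          ext i
          by_cases h : i = j
          · subst h; simp
          · simp [h]
        simp [this, bc_cast])
    (by
      intro p
      refine ContinuousLinearMap.opNorm_le_bound _ (Finset.sum_nonneg fun _ _ => abs_nonneg _) ?_
      rintro ⟨τ, z⟩
      have hz : L.bc (fun i => (p.2 i : ℂ)) z =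
          ∑ j, z j * ((L.bq p.2 (Pi.single j 1) : ℚ) : ℂ) := by
        conv_lhs => rw [pi_eq_sum_univ' z, bc_sum_right]
        refine Finset.sum_congr rfl fun j _ => ?_
        rw [bc_smul_right, ← bc_cast]
        congr 2
        ext i
        by_cases h : i = j
        · subst h; simp
        · simp [h]
      rw [phase_apply, Fintype.sum_option, hz, add_mul, Finset.sum_mul]
      refine (norm_add_le _ _).trans (add_le_add ?_ ((norm_sum_le _ _).trans
        (Finset.sum_le_sum fun j _ => ?_)))
      · rw [norm_mul]
        refine mul_le_mul (by simp) (norm_fst_le (τ, z)) (norm_nonneg _) (abs_nonneg _)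
      · rw [norm_mul, mul_comm]
        refine mul_le_mul (by simp) ((norm_le_pi_norm z j).trans (norm_snd_le (τ, z)))
          (norm_nonneg _) (abs_nonneg _))
    isOpen_dom b hF hq
  rw [hF'.fderiv]
  exact ⟨hF', hs⟩

/-- The heat operator `(1/2πi) (∂_τ - (1/4πi) Δ)`, which equals `(1/2πi) ∂_τ + (1/8π²) Δ`, where `Δ`
is the Laplacian `∑ a, c a ∂_{v a}²` of the diagonalization `∑ a, c a • v a ⊗ v a` of the inverse
Gram matrix. -/
def heat (v : Fin n → Fin n → ℚ) (c : Fin n → ℚ) (f : ℂ × (Fin n → ℂ) → ℂ)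
    (q : ℂ × (Fin n → ℂ)) : ℂ :=
  1 / (2 * (Real.pi : ℂ) * I) * (fderiv ℂ f q (1, 0) - 1 / (4 * (Real.pi : ℂ) * I) *
    ∑ a, (c a : ℂ) * fderiv ℂ (fun q' => fderiv ℂ f q' (0, fun i => (v a i : ℂ))) q
      (0, fun i => (v a i : ℂ)))

end EvenLattice

lemma hasDerivAt_line {n : ℕ} {F : ℂ × (Fin n → ℂ) → ℂ} {F' : ℂ × (Fin n → ℂ) →L[ℂ] ℂ}
    {τ : ℂ} {z V : Fin n → ℂ} {s : ℂ} (h : HasFDerivAt F F' (τ, z + s • V)) :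
    HasDerivAt (fun s : ℂ => F (τ, z + s • V)) (F' (0, V)) s := by
  have h1 : HasDerivAt (fun s : ℂ => (τ, z + s • V)) ((0 : ℂ), V) s := by
    have : HasDerivAt (fun s : ℂ => z + s • V) V s := by
      simpa using ((hasDerivAt_id s).smul_const V).const_add z
    exact (hasDerivAt_const s τ).prodMk this
  exact h.comp_hasDerivAt s h1

namespace WeakJacobiForm

variable {n : ℕ} {L : EvenLattice n} {k : ℤ} (ψ : WeakJacobiForm L k)

/-- The underlying function, uncurried. -/
def fn (q : ℂ × (Fin n → ℂ)) : ℂ := ψ.toFun q.1 q.2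

lemma fn_hasSum {q : ℂ × (Fin n → ℂ)} (hq : q ∈ UH ×ˢ (Set.univ : Set (Fin n → ℂ))) :
    HasSum (fun p : ℤ × (Fin n → ℚ) =>
      ψ.coef p.1 p.2 * cexp (2 * (Real.pi : ℂ) * I * L.phase p q)) (ψ.fn q) :=
  ψ.expansion q.1 hq.1 q.2

/-- The first derivatives of a Jacobi form and their Fourier expansions. -/
lemma fn_fderiv {q : ℂ × (Fin n → ℂ)} (hq : q ∈ UH ×ˢ (Set.univ : Set (Fin n → ℂ))) :
    HasFDerivAt ψ.fn (fderiv ℂ ψ.fn q) q ∧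
      ∀ V, HasSum (fun p : ℤ × (Fin n → ℚ) => 2 * (Real.pi : ℂ) * I * L.phase p V *
        ψ.coef p.1 p.2 * cexp (2 * (Real.pi : ℂ) * I * L.phase p q)) (fderiv ℂ ψ.fn q V) :=
  L.series_fderiv (fun p => ψ.coef p.1 p.2) (fun _ => ψ.fn_hasSum) hq

/-- The second derivatives of a Jacobi form and their Fourier expansions. -/
lemma fn_fderiv2 {q : ℂ × (Fin n → ℂ)} (hq : q ∈ UH ×ˢ (Set.univ : Set (Fin n → ℂ)))
    (V : ℂ × (Fin n → ℂ)) :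
    HasFDerivAt (fun q => fderiv ℂ ψ.fn q V) (fderiv ℂ (fun q => fderiv ℂ ψ.fn q V) q) q ∧
      ∀ W, HasSum (fun p : ℤ × (Fin n → ℚ) => 2 * (Real.pi : ℂ) * I * L.phase p W *
        (2 * (Real.pi : ℂ) * I * L.phase p V * ψ.coef p.1 p.2) *
          cexp (2 * (Real.pi : ℂ) * I * L.phase p q))
        (fderiv ℂ (fun q => fderiv ℂ ψ.fn q V) q W) :=
  L.series_fderiv (fun p => 2 * (Real.pi : ℂ) * I * L.phase p V * ψ.coef p.1 p.2)
    (fun _ hq' => (ψ.fn_fderiv hq').2 V) hq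

/-- The first two derivatives of a Jacobi form along a complex line in `L ⊗ ℂ`, in the shape used by
`gauss_deriv`. -/
lemma line_derivs {τ : ℂ} (hτ : τ ∈ UH) (z V : Fin n → ℂ) :
    (∀ s : ℂ, HasDerivAt (fun s : ℂ => ψ.fn (τ, z + s • V))
      (fderiv ℂ ψ.fn (τ, z + s • V) (0, V)) s) ∧
    HasDerivAt (fun s : ℂ => fderiv ℂ ψ.fn (τ, z + s • V) (0, V))
      (fderiv ℂ (fun q => fderiv ℂ ψ.fn q (0, V)) (τ, z) (0, V)) 0 := by
  refine ⟨fun s => hasDerivAt_line (ψ.fn_fderiv ⟨hτ, trivial⟩).1, ?_⟩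
  refine hasDerivAt_line (F := fun q => fderiv ℂ ψ.fn q (0, V)) ?_
  simpa using (ψ.fn_fderiv2 (q := (τ, z)) ⟨hτ, trivial⟩ (0, V)).1

end WeakJacobiForm

/-! ### Transformation of the heat operator -/

namespace EvenLattice

variable {n : ℕ} (L : EvenLattice n)

variable {L} {v : Fin n → Fin n → ℚ} {c : Fin n → ℚ}

lemma IsDiag.sum_sq (h : L.IsDiag v c) (z : Fin n → ℂ) :
    ∑ a, (c a : ℂ) * L.bc z (fun i => (v a i : ℂ)) ^ 2 = L.bc z z := by
  conv_rhs => arg 3; rw [← h.complete z]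
  rw [bc_sum_right]
  refine Finset.sum_congr rfl fun a _ => ?_
  rw [bc_smul_right]; ring

/-- Expansion of `z` in the orthogonal basis, inside a derivative `T`. -/
lemma IsDiag.sum_apply (h : L.IsDiag v c) (T : ℂ × (Fin n → ℂ) →L[ℂ] ℂ) (z : Fin n → ℂ) :
    ∑ a, (c a : ℂ) * (L.bc z (fun i => (v a i : ℂ)) * T (0, fun i => (v a i : ℂ))) =
      T (0, z) := by
  conv_rhs => rw [← h.complete z]
  have := map_sum (T.comp (ContinuousLinearMap.inr ℂ ℂ (Fin n → ℂ)))
    (fun a => ((c a : ℂ) * L.bc z (fun i => (v a i : ℂ))) • fun i => (v a i : ℂ)) Finset.univ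
  simp only [ContinuousLinearMap.comp_apply, ContinuousLinearMap.inr_apply] at this
  rw [this]
  refine Finset.sum_congr rfl fun a _ => ?_
  have e : ((0 : ℂ), ((c a : ℂ) * L.bc z (fun i => (v a i : ℂ))) • fun i => (v a i : ℂ)) =
    ((c a : ℂ) * L.bc z (fun i => (v a i : ℂ))) • ((0 : ℂ), fun i => (v a i : ℂ)) := by simp
  rw [e, map_smul, smul_eq_mul]; ring

/-- The trace of the form against its inverse. This is where the rank `n` in the factor `2k - n`
comes from. -/
lemma IsDiag.sum_norm (h : L.IsDiag v c) :
    ∑ a, (c a : ℂ) * L.bc (fun i => (v a i : ℂ)) (fun i => (v a i : ℂ)) = n := by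
  have : ∀ a, (c a : ℂ) * L.bc (fun i => (v a i : ℂ)) (fun i => (v a i : ℂ)) = 1 := fun a => by
    rw [bc_cast]; exact_mod_cast h.norm a
  simp [this]

end EvenLattice

namespace WeakJacobiForm

variable {n : ℕ} {L : EvenLattice n} {k : ℤ} (ψ : WeakJacobiForm L k)
  {v : Fin n → Fin n → ℚ} {c : Fin n → ℚ}

/-- The series `H(ψ)` is the heat operator applied to `ψ`. -/
lemma heat_hasSum (h : L.IsDiag v c)
    {q : ℂ × (Fin n → ℂ)} (hq : q ∈ UH ×ˢ (Set.univ : Set (Fin n → ℂ))) :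
    HasSum (fun p : ℤ × (Fin n → ℚ) =>
      (1 / 2 : ℂ) * ((2 * (p.1 : ℚ) - L.bq p.2 p.2 : ℚ) : ℂ) * ψ.coef p.1 p.2 *
        cexp (2 * (Real.pi : ℂ) * I * L.phase p q)) (EvenLattice.heat v c ψ.fn q) := by
  have hpi : (Real.pi : ℂ) ≠ 0 := by exact_mod_cast Real.pi_ne_zero
  have h1 := (ψ.fn_fderiv hq).2 (1, 0)
  have h2 := hasSum_sum (s := Finset.univ) fun a (_ : a ∈ Finset.univ) =>
    ((ψ.fn_fderiv2 hq (0, fun i => (v a i : ℂ))).2 (0, fun i => (v a i : ℂ))).mul_left (c a : ℂ)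
  have h3 := (h1.sub (h2.mul_left (1 / (4 * (Real.pi : ℂ) * I)))).mul_left
    (1 / (2 * (Real.pi : ℂ) * I))
  refine hasSum_of_eq h3 fun p => ?_
  have hb := h.sum_sq (fun i => (p.2 i : ℂ))
  have hs : ∑ a, (c a : ℂ) * (2 * (Real.pi : ℂ) * I * L.phase p (0, fun i => (v a i : ℂ)) *
      (2 * (Real.pi : ℂ) * I * L.phase p (0, fun i => (v a i : ℂ)) * ψ.coef p.1 p.2) *
          cexp (2 * (Real.pi : ℂ) * I * L.phase p q)) =
      (2 * (Real.pi : ℂ) * I) ^ 2 * (L.bq p.2 p.2 : ℂ) * ψ.coef p.1 p.2 *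
        cexp (2 * (Real.pi : ℂ) * I * L.phase p q) := by
    rw [← EvenLattice.bc_cast, ← hb, Finset.mul_sum, Finset.sum_mul, Finset.sum_mul]
    refine Finset.sum_congr rfl fun a _ => ?_
    simp only [EvenLattice.phase_apply]; ring
  have h10 : L.phase p (1, 0) = (p.1 : ℂ) := by simp [EvenLattice.bc]
  rw [hs, h10]
  generalize cexp (2 * (Real.pi : ℂ) * I * L.phase p q) = E
  push_cast
  field_simp
  ring

/-- The heat operator commutes with the elliptic transformations. -/
lemma heat_elliptic (h : L.IsDiag v c)
    {x y : Fin n → ℚ} (hx : L.IsIntVec x) (hy : L.IsIntVec y) {τ : ℂ}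
    (hτ : τ ∈ UH) (z : Fin n → ℂ) :
    EvenLattice.heat v c ψ.fn (τ, fun i => z i + (x i : ℂ) * τ + (y i : ℂ)) =
      cexp (-((Real.pi : ℂ) * I) * ((L.bq x x : ℂ) * τ + 2 * L.bc (fun i => (x i : ℂ)) z)) *
        EvenLattice.heat v c ψ.fn (τ, z) := by
  have hpi : (Real.pi : ℂ) ≠ 0 := by exact_mod_cast Real.pi_ne_zero
  set X : Fin n → ℂ := fun i => (x i : ℂ) with hX
  set z' : Fin n → ℂ := fun i => z i + (x i : ℂ) * τ + (y i : ℂ) with hz'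
  set e := cexp (-((Real.pi : ℂ) * I) * ((L.bq x x : ℂ) * τ + 2 * L.bc X z)) with he
  -- derivatives along the lattice directions
  have hline : ∀ V : Fin n → ℂ,
      fderiv ℂ ψ.fn (τ, z') (0, V) = e * (-(2 * Real.pi * I) * L.bc X V * ψ.fn (τ, z) +
        fderiv ℂ ψ.fn (τ, z) (0, V)) ∧
      fderiv ℂ (fun q => fderiv ℂ ψ.fn q (0, V)) (τ, z') (0, V) =
        e * ((-(2 * Real.pi * I) * L.bc X V) ^ 2 * ψ.fn (τ, z) +
          2 * (-(2 * Real.pi * I) * L.bc X V) * fderiv ℂ ψ.fn (τ, z) (0, V) +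
          fderiv ℂ (fun q => fderiv ℂ ψ.fn q (0, V)) (τ, z) (0, V)) := by
    intro V
    have h1 := ψ.line_derivs hτ z' V
    have h2 := ψ.line_derivs hτ z V
    have := gauss_deriv (K := 1) (J := 1) (C := 0) (B := -(2 * Real.pi * I) * L.bc X V)
      (A := -((Real.pi : ℂ) * I) * ((L.bq x x : ℂ) * τ + 2 * L.bc X z))
      h1.1 h1.2 h2.1 h2.2 (fun s => by
        have := ψ.elliptic x y hx hy τ hτ (z + s • V)
        have hv : z' + s • V = fun i => (z + s • V) i + (x i : ℂ) * τ + (y i : ℂ) := by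
          ext i; simp [hz']; ring
        simp only [fn, hv, this, one_mul]
        rw [L.bc_add_right, L.bc_smul_right]
        congr 2; ring)
    simpa [he] using this
  -- derivative in `τ`
  have hτ' : fderiv ℂ ψ.fn (τ, z') (1, X) =
      e * (-((Real.pi : ℂ) * I) * L.bq x x * ψ.fn (τ, z) + fderiv ℂ ψ.fn (τ, z) (1, 0)) := by
    have c1 : HasDerivAt (fun t : ℂ => (t, fun i => z i + (x i : ℂ) * t + (y i : ℂ)))
        ((1 : ℂ), X) τ := by
      refine (hasDerivAt_id τ).prodMk (hasDerivAt_pi.2 fun i => ?_)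
      simpa using (((hasDerivAt_id τ).const_mul (x i : ℂ)).const_add (z i)).add_const (y i : ℂ)
    have c2 : HasDerivAt (fun t : ℂ => (t, z)) ((1 : ℂ), (0 : Fin n → ℂ)) τ :=
      (hasDerivAt_id τ).prodMk (hasDerivAt_const τ z)
    have d1 := (ψ.fn_fderiv (q := (τ, z')) ⟨hτ, trivial⟩).1.comp_hasDerivAt τ c1
    have d2 := (ψ.fn_fderiv (q := (τ, z)) ⟨hτ, trivial⟩).1.comp_hasDerivAt τ c2
    have d3 : HasDerivAt (fun t : ℂ => cexp (-((Real.pi : ℂ) * I) *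
        ((L.bq x x : ℂ) * t + 2 * L.bc X z))) (e * (-((Real.pi : ℂ) * I) * L.bq x x)) τ := by
      have := ((((hasDerivAt_id τ).const_mul (L.bq x x : ℂ)).add_const
        (2 * L.bc X z)).const_mul (-((Real.pi : ℂ) * I))).cexp
      simpa [he] using this
    have d4 := d3.mul d2
    have : (ψ.fn ∘ fun t : ℂ => (t, fun i => z i + (x i : ℂ) * t + (y i : ℂ))) =ᶠ[nhds τ]
        (fun t : ℂ => cexp (-((Real.pi : ℂ) * I) *
          ((L.bq x x : ℂ) * t + 2 * L.bc X z))) * (ψ.fn ∘ fun t => (t, z)) := by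
      filter_upwards [(isOpen_lt continuous_const Complex.continuous_im).mem_nhds hτ] with t ht
      exact ψ.elliptic x y hx hy t ht z
    rw [(d1.congr_of_eventuallyEq this.symm).unique d4]
    simp only [Function.comp, ← he]
    ring
  have hsplit : fderiv ℂ ψ.fn (τ, z') (1, X) =
      fderiv ℂ ψ.fn (τ, z') (1, 0) + fderiv ℂ ψ.fn (τ, z') (0, X) := by
    rw [← map_add]; simp
  have ht : fderiv ℂ ψ.fn (τ, z') (1, 0) = e * ((Real.pi : ℂ) * I * L.bq x x * ψ.fn (τ, z) +
      fderiv ℂ ψ.fn (τ, z) (1, 0) - fderiv ℂ ψ.fn (τ, z) (0, X)) := by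
    have e1 := (hline X).1
    have e2 : L.bc X X = (L.bq x x : ℂ) := L.bc_cast x x
    rw [e2] at e1
    linear_combination hτ' - hsplit - e1
  have hlap : ∑ a, (c a : ℂ) * fderiv ℂ (fun q' => fderiv ℂ ψ.fn q' (0, fun i => (v a i : ℂ)))
      (τ, z') (0, fun i => (v a i : ℂ)) =
      e * ((2 * Real.pi * I) ^ 2 * L.bq x x * ψ.fn (τ, z) -
        4 * Real.pi * I * fderiv ℂ ψ.fn (τ, z) (0, X) +
        ∑ a, (c a : ℂ) * fderiv ℂ (fun q' => fderiv ℂ ψ.fn q' (0, fun i => (v a i : ℂ)))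
      (τ, z) (0, fun i => (v a i : ℂ))) := by
    rw [← L.bc_cast, ← h.sum_sq, ← h.sum_apply]
    simp only [Finset.mul_sum, Finset.sum_mul, ← Finset.sum_add_distrib, ← Finset.sum_sub_distrib]
    refine Finset.sum_congr rfl fun a _ => ?_
    rw [(hline _).2]; ring
  rw [EvenLattice.heat, EvenLattice.heat, hlap, ht]
  field_simp
  ring

/-- The modular transformation of `H(ψ)`, with an anomaly proportional to `(2k - n) ψ`. It is stated
with the elliptic variable `w = z / (c'τ + d)`, which keeps `w` fixed in the `τ`-derivative. -/
lemma heat_modular (h : L.IsDiag v c)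
    {a b c' d : ℤ} (habcd : a * d - b * c' = 1) {τ : ℂ} (hτ : τ ∈ UH)
    (w : Fin n → ℂ) :
    EvenLattice.heat v c ψ.fn (((a : ℂ) * τ + b) / ((c' : ℂ) * τ + d), w) =
      ((c' : ℂ) * τ + d) ^ (k + 2) *
        cexp ((Real.pi : ℂ) * I * c' * ((c' : ℂ) * τ + d) * L.bc w w) *
        (EvenLattice.heat v c ψ.fn (τ, ((c' : ℂ) * τ + d) • w) +
          (2 * (k : ℂ) - n) * c' / (4 * Real.pi * I * ((c' : ℂ) * τ + d)) *
            ψ.fn (τ, ((c' : ℂ) * τ + d) • w)) := by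
  have hpi : (Real.pi : ℂ) ≠ 0 := by exact_mod_cast Real.pi_ne_zero
  have hcd : c' ≠ 0 ∨ d ≠ 0 := by
    by_contra! hc
    simp [hc.1, hc.2] at habcd
  have hJt : ∀ t ∈ UH, (c' : ℂ) * t + d ≠ 0 := fun t ht => moebius_denom_ne hcd ht
  have hγ : ((a : ℂ) * τ + b) / ((c' : ℂ) * τ + d) ∈ UH := (G2_modular habcd hτ).1
  -- the transformation law, with the elliptic variable on the left unscaled
  have hmod : ∀ t ∈ UH, ∀ u : Fin n → ℂ,
      ψ.fn (((a : ℂ) * t + b) / ((c' : ℂ) * t + d), u) = ((c' : ℂ) * t + d) ^ k *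
        cexp ((Real.pi : ℂ) * I * c' * ((c' : ℂ) * t + d) * L.bc u u) *
          ψ.fn (t, ((c' : ℂ) * t + d) • u) := by
    intro t ht u
    have := ψ.modular a b c' d habcd t ht (((c' : ℂ) * t + d) • u)
    have e1 : (fun i => (((c' : ℂ) * t + d) • u) i / ((c' : ℂ) * t + d)) = u := by
      ext i; simp [hJt t ht]
    rw [e1, L.bc_smul_left, L.bc_smul_right] at this
    rw [fn, fn, this]
    congr 3
    have := hJt t ht
    field_simp
  have hJ := hJt τ hτ
  set J : ℂ := (c' : ℂ) * τ + d with hJdef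
  set τ' : ℂ := ((a : ℂ) * τ + b) / J with hτ'def
  set z := J • w with hz
  set e := cexp ((Real.pi : ℂ) * I * c' * J * L.bc w w) with he
  have hline : ∀ V : Fin n → ℂ,
      fderiv ℂ (fun q => fderiv ℂ ψ.fn q (0, V)) (τ', w) (0, V) =
        J ^ k * e * (((2 * Real.pi * I * c' * J * L.bc w V) ^ 2 +
          2 * (Real.pi * I * c' * J * L.bc V V)) * ψ.fn (τ, z) +
          2 * (2 * Real.pi * I * c' * J * L.bc w V) * J * fderiv ℂ ψ.fn (τ, z) (0, V) +
          J ^ 2 * fderiv ℂ (fun q => fderiv ℂ ψ.fn q (0, V)) (τ, z) (0, V)) := by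
    intro V
    have h1 := ψ.line_derivs hγ w V
    have h2 := ψ.line_derivs hτ z V
    have := (gauss_deriv (K := J ^ k) (J := J) (C := Real.pi * I * c' * J * L.bc V V)
      (B := 2 * Real.pi * I * c' * J * L.bc w V)
      (A := (Real.pi : ℂ) * I * c' * J * L.bc w w)
      h1.1 h1.2 h2.1 h2.2 (fun s => by
        have := hmod τ hτ (w + s • V)
        rw [this, ← hJdef]
        have e2 : J • (w + s • V) = z + (J * s) • V := by rw [smul_add, smul_smul]
        rw [e2]
        congr 3
        simp only [L.bc_add_right, L.bc_smul_right, L.bc_add_left, L.bc_smul_left, L.bc_comm V w]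
        ring)).2
    simpa [← he] using this
  have ht : fderiv ℂ ψ.fn (τ', w) (1, 0) = J ^ 2 * (J ^ k * e * ((k * c' / J +
      Real.pi * I * c' ^ 2 * L.bc w w) * ψ.fn (τ, z) + (fderiv ℂ ψ.fn (τ, z) (1, 0) +
        c' * fderiv ℂ ψ.fn (τ, z) (0, w)))) := by
    have dJ : HasDerivAt (fun t : ℂ => (c' : ℂ) * t + d) c' τ := by
      simpa using ((hasDerivAt_id τ).const_mul (c' : ℂ)).add_const (d : ℂ)
    have dγ : HasDerivAt (fun t : ℂ => ((a : ℂ) * t + b) / ((c' : ℂ) * t + d)) (1 / J ^ 2) τ := by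
      have da : HasDerivAt (fun t : ℂ => (a : ℂ) * t + b) a τ := by
        simpa using ((hasDerivAt_id τ).const_mul (a : ℂ)).add_const (b : ℂ)
      refine (da.div dJ hJ).congr_deriv ?_
      congr 1
      have : (a : ℂ) * d - b * c' = 1 := by exact_mod_cast habcd
      linear_combination this
    have c1 := dγ.prodMk (hasDerivAt_const τ w)
    have c2 : HasDerivAt (fun t : ℂ => (t, ((c' : ℂ) * t + d) • w)) ((1 : ℂ), (c' : ℂ) • w) τ :=
      (hasDerivAt_id τ).prodMk (dJ.smul_const w)
    have d1 := (ψ.fn_fderiv (q := (τ', w)) ⟨hγ, trivial⟩).1.comp_hasDerivAt τ c1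
    have d2 := (ψ.fn_fderiv (q := (τ, z)) ⟨hτ, trivial⟩).1.comp_hasDerivAt τ c2
    have d3 : HasDerivAt (fun t : ℂ => ((c' : ℂ) * t + d) ^ k) (k * J ^ (k - 1) * c') τ :=
      HasDerivAt.comp (h₂ := fun x : ℂ => x ^ k) τ (hasDerivAt_zpow k J (Or.inl hJ)) dJ
    have d4 : HasDerivAt (fun t : ℂ => cexp ((Real.pi : ℂ) * I * c' * ((c' : ℂ) * t + d) *
        L.bc w w)) (e * (Real.pi * I * c' * c' * L.bc w w)) τ :=
      ((dJ.const_mul ((Real.pi : ℂ) * I * c')).mul_const (L.bc w w)).cexp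
    have d5 := (d3.mul d4).mul d2
    have := d1.congr_of_eventuallyEq (f₁ := ((fun t : ℂ => ((c' : ℂ) * t + d) ^ k) *
        fun t : ℂ => cexp ((Real.pi : ℂ) * I * c' * ((c' : ℂ) * t + d) * L.bc w w)) *
          (ψ.fn ∘ fun t : ℂ => (t, ((c' : ℂ) * t + d) • w))) (by
      filter_upwards [(isOpen_lt continuous_const Complex.continuous_im).mem_nhds hτ] with t ht
      exact (hmod t ht w).symm)
    have key := this.unique d5
    have es : ((1 / J ^ 2 : ℂ), (0 : Fin n → ℂ)) = (1 / J ^ 2 : ℂ) • ((1 : ℂ), (0 : Fin n → ℂ)) := by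
      simp
    have es2 : ((1 : ℂ), (c' : ℂ) • w) = (1, 0) + (c' : ℂ) • ((0 : ℂ), w) := by simp
    rw [es, map_smul, es2, map_add, map_smul, zpow_sub_one₀ hJ] at key
    simp only [Pi.mul_apply, Function.comp, smul_eq_mul, ← hJdef, ← he, ← hz] at key
    field_simp at key ⊢
    linear_combination key
  have hlap : ∑ a, (c a : ℂ) * fderiv ℂ (fun q' => fderiv ℂ ψ.fn q' (0, fun i => (v a i : ℂ)))
      (τ', w) (0, fun i => (v a i : ℂ)) =
      J ^ k * e * (((2 * Real.pi * I * c' * J) ^ 2 * L.bc w w +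
          2 * (Real.pi * I * c' * J) * n) * ψ.fn (τ, z) +
          2 * (2 * Real.pi * I * c' * J) * J * fderiv ℂ ψ.fn (τ, z) (0, w) +
        J ^ 2 * ∑ a, (c a : ℂ) * fderiv ℂ (fun q' => fderiv ℂ ψ.fn q' (0, fun i => (v a i : ℂ)))
      (τ, z) (0, fun i => (v a i : ℂ))) := by
    rw [← h.sum_sq, ← h.sum_apply, ← h.sum_norm]
    simp only [Finset.mul_sum, Finset.sum_mul, ← Finset.sum_add_distrib]
    refine Finset.sum_congr rfl fun a _ => ?_
    rw [hline]; ring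
  rw [EvenLattice.heat, EvenLattice.heat, hlap, ht, zpow_add₀ hJ,
    show J ^ (2 : ℤ) = J ^ 2 from zpow_ofNat J 2]
  field_simp
  ring

end WeakJacobiForm

/-! ### The product with `G₂` and the weight-raised form -/

namespace WeakJacobiForm

variable {n : ℕ} {L : EvenLattice n} {k : ℤ} (ψ : WeakJacobiForm L k)

/-- The Fourier coefficients of `G₂ · ψ`; the sum is finite because `ψ.coef` vanishes for
sufficiently negative exponents of `q`. -/
def g2MulCoef (m : ℤ) (l : Fin n → ℚ) : ℂ := ∑' j : ℕ, g2coef j * ψ.coef (m - j) l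

lemma g2MulCoef_summable (m : ℤ) (l : Fin n → ℚ) :
    Summable fun j : ℕ => g2coef j * ψ.coef (m - j) l := by
  obtain ⟨n₁, h⟩ := ψ.coef_bdd
  refine summable_of_ne_finset_zero (s := Finset.range ((m - n₁).toNat + 1)) fun j hj => ?_
  rw [h, mul_zero]
  rw [Finset.mem_range] at hj
  omega

/-- Multiplication by `G₂` only moves coefficients to larger exponents of `q`. -/
lemma exists_of_g2MulCoef_ne_zero {m : ℤ} {l : Fin n → ℚ} (h : ψ.g2MulCoef m l ≠ 0) :
    ∃ m' ≤ m, ψ.coef m' l ≠ 0 := by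
  by_contra! hne
  refine h ?_
  rw [g2MulCoef]
  simp [hne]

/-- Reindexing of pairs of terms of `G₂` and `ψ` by the total exponent of `q`. -/
def shiftEquiv (n : ℕ) : (ℤ × (Fin n → ℚ)) × ℕ ≃ ℕ × (ℤ × (Fin n → ℚ)) where
  toFun x := (x.2, (x.1.1 - x.2, x.1.2))
  invFun y := ((y.2.1 + y.1, y.2.2), y.1)
  left_inv x := by simp
  right_inv y := by simp

/-- The part of the product series with total exponent `m` of `q` and exponent `l` of `ζ`. -/
lemma g2Mul_fiber (m : ℤ) (l : Fin n → ℚ) (q : ℂ × (Fin n → ℂ)) :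
    HasSum (fun j : ℕ => (g2coef j * cexp (2 * (Real.pi : ℂ) * I * ((j : ℂ) * q.1))) *
        (ψ.coef (m - j) l * cexp (2 * (Real.pi : ℂ) * I * L.phase (m - j, l) q)))
      (ψ.g2MulCoef m l * cexp (2 * (Real.pi : ℂ) * I * L.phase (m, l) q)) := by
  have h4 : HasSum (fun j : ℕ => g2coef j * ψ.coef (m - j) l) (ψ.g2MulCoef m l) :=
    (ψ.g2MulCoef_summable m l).hasSum
  refine hasSum_of_eq (h4.mul_right _) fun j => ?_
  have h7 : cexp (2 * (Real.pi : ℂ) * I * L.phase (m, l) q) =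
      cexp (2 * (Real.pi : ℂ) * I * ((j : ℂ) * q.1)) *
        cexp (2 * (Real.pi : ℂ) * I * L.phase (m - j, l) q) := by
    rw [← Complex.exp_add]
    congr 1
    simp only [EvenLattice.phase_apply]
    push_cast
    ring
  rw [h7]
  ring

/-- The Fourier expansion of `G₂ ψ`, obtained by multiplying the two absolutely convergent
series and collecting the terms with equal total exponent of `q`. -/
lemma g2Mul_hasSum {q : ℂ × (Fin n → ℂ)} (hq : q ∈ UH ×ˢ (Set.univ : Set (Fin n → ℂ))) :
    HasSum (fun p : ℤ × (Fin n → ℚ) => ψ.g2MulCoef p.1 p.2 *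
      cexp (2 * (Real.pi : ℂ) * I * L.phase p q)) (G2 q.1 * ψ.fn q) := by
  have h1 := G2_hasSum hq.1
  have h2 := ψ.fn_hasSum hq
  have h3 := hasSum_mul h1 h2
  have h5 : HasSum (fun x : (ℤ × (Fin n → ℚ)) × ℕ =>
      (g2coef x.2 * cexp (2 * (Real.pi : ℂ) * I * ((x.2 : ℂ) * q.1))) *
        (ψ.coef (x.1.1 - x.2) x.1.2 *
          cexp (2 * (Real.pi : ℂ) * I * L.phase (x.1.1 - x.2, x.1.2) q)))
      (G2 q.1 * ψ.fn q) := (shiftEquiv n).hasSum_iff.mpr h3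
  exact h5.prod_fiberwise fun p => ψ.g2Mul_fiber p.1 p.2 q

/-- The Fourier coefficients of `H_k(ψ)`. -/
def raiseCoef (m : ℤ) (l : Fin n → ℚ) : ℂ :=
  (1 / 2 : ℂ) * ((2 * (m : ℚ) - L.bq l l : ℚ) : ℂ) * ψ.coef m l +
    (2 * (k : ℂ) - n) * ψ.g2MulCoef m l

lemma exists_of_raiseCoef_ne_zero {m : ℤ} {l : Fin n → ℚ} (h : ψ.raiseCoef m l ≠ 0) :
    ∃ m' ≤ m, ψ.coef m' l ≠ 0 := by
  by_cases h0 : ψ.coef m l = 0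
  · refine ψ.exists_of_g2MulCoef_ne_zero fun h1 => h ?_
    simp [raiseCoef, h0, h1]
  · exact ⟨m, le_rfl, h0⟩

variable {v : Fin n → Fin n → ℚ} {c : Fin n → ℚ}

lemma raise_hasSum (h : L.IsDiag v c)
    {q : ℂ × (Fin n → ℂ)} (hq : q ∈ UH ×ˢ (Set.univ : Set (Fin n → ℂ))) :
    HasSum (fun p : ℤ × (Fin n → ℚ) =>
      ψ.raiseCoef p.1 p.2 * cexp (2 * (Real.pi : ℂ) * I * L.phase p q))
      (EvenLattice.heat v c ψ.fn q + (2 * (k : ℂ) - n) * G2 q.1 * ψ.fn q) := by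
  have h1 := ψ.heat_hasSum h hq
  have h2 := (ψ.g2Mul_hasSum hq).mul_left (2 * (k : ℂ) - n)
  rw [← mul_assoc] at h2
  refine hasSum_of_eq (h1.add h2) fun p => ?_
  rw [raiseCoef]
  ring

/-- The weight-raised form `H_k(ψ) = H(ψ) + (2k - n) G₂ ψ`. -/
def raise (h : L.IsDiag v c) : WeakJacobiForm L (k + 2) where
  toFun τ z := EvenLattice.heat v c ψ.fn (τ, z) + (2 * (k : ℂ) - n) * G2 τ * ψ.fn (τ, z)
  coef := ψ.raiseCoef
  holo q hq := (L.series_fderiv (fun p => ψ.raiseCoef p.1 p.2)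
    (fun _ hq' => ψ.raise_hasSum h hq') hq).1.differentiableAt.differentiableWithinAt
  modular a b c' d habcd τ hτ z := by
    have hJ : (c' : ℂ) * τ + d ≠ 0 := by
      refine moebius_denom_ne ?_ hτ
      by_contra! hc
      simp [hc.1, hc.2] at habcd
    have hpi : (Real.pi : ℂ) ≠ 0 := by exact_mod_cast Real.pi_ne_zero
    have e1 : (fun i => z i / ((c' : ℂ) * τ + d)) = ((c' : ℂ) * τ + d)⁻¹ • z := by
      ext i; simp [div_eq_inv_mul]
    have e2 := ψ.modular a b c' d habcd τ hτ z
    have e3 := ψ.heat_modular h habcd hτ (((c' : ℂ) * τ + d)⁻¹ • z)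
    rw [smul_inv_smul₀ hJ, L.bc_smul_left, L.bc_smul_right] at e3
    have e4 : (Real.pi : ℂ) * I * c' * ((c' : ℂ) * τ + d) * (((c' : ℂ) * τ + d)⁻¹ *
        (((c' : ℂ) * τ + d)⁻¹ * L.bc z z)) =
        (Real.pi : ℂ) * I * c' * L.bc z z / ((c' : ℂ) * τ + d) := by
      field_simp
    rw [e4] at e3
    simp only [fn]
    -- the anomalies of `H(ψ)` and of `(2k - n) G₂ ψ` cancel
    rw [(G2_modular habcd hτ).2, e2, e1]
    change _ = _ * _ * (_ + _ * _ * ψ.toFun τ z)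
    rw [e3, fn, zpow_add₀ hJ, show ((c' : ℂ) * τ + d) ^ (2 : ℤ) = ((c' : ℂ) * τ + d) ^ 2 from
      zpow_ofNat _ 2]
    field_simp
    ring
  elliptic x y hx hy τ hτ z := by
    have e1 := ψ.elliptic x y hx hy τ hτ z
    have e2 := ψ.heat_elliptic h hx hy hτ z
    rw [e2]
    simp only [fn]
    rw [e1]
    ring
  coef_bdd := by
    obtain ⟨n₁, h₁⟩ := ψ.coef_bdd
    refine ⟨n₁, fun m l hm => ?_⟩
    by_contra h0
    obtain ⟨m', hm', h2⟩ := ψ.exists_of_raiseCoef_ne_zero h0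
    exact h2 (h₁ m' l (by omega))
  coef_dual m l h0 := by
    obtain ⟨m', -, h2⟩ := ψ.exists_of_raiseCoef_ne_zero h0
    exact ψ.coef_dual m' l h2
  coef_finite m := by
    obtain ⟨n₁, h₁⟩ := ψ.coef_bdd
    refine ((Set.finite_Icc n₁ m).biUnion fun m' _ => ψ.coef_finite m').subset fun l h0 => ?_
    obtain ⟨m', hm', h2⟩ := ψ.exists_of_raiseCoef_ne_zero h0
    refine Set.mem_biUnion (⟨?_, hm'⟩ : m' ∈ Set.Icc n₁ m) h2
    by_contra hlt
    exact h2 (h₁ m' l (not_le.1 hlt))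
  expansion τ hτ z := ψ.raise_hasSum h (q := (τ, z)) ⟨hτ, trivial⟩

end WeakJacobiForm

/-- if `ψ = Σ a(n,l) qⁿ ζ^l` is a weakly holomorphic Jacobi form of weight `k`
and index `L` (of rank `n₀ ≥ 1`), then
`H_k(ψ) = H(ψ) + (2k − n₀)·G₂·ψ`, where
`H(ψ) = (1/2) Σ (2n − (l,l)) a(n,l) qⁿ ζ^l`,
is a weakly holomorphic Jacobi form of weight `k + 2` and index `L`. -/
theorem weight_raising {n₀ : ℕ} (hn : 1 ≤ n₀) (L : EvenLattice n₀) (k : ℤ)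
    (ψ : WeakJacobiForm L k) :
    ∃ Φ : WeakJacobiForm L (k + 2), ∀ τ ∈ UH, ∀ z : Fin n₀ → ℂ,
      HasSum (fun p : ℤ × (Fin n₀ → ℚ) =>
          (1 / 2 : ℂ) * ((2 * (p.1 : ℚ) - L.bq p.2 p.2 : ℚ) : ℂ) * ψ.coef p.1 p.2 *
            Complex.exp (2 * (Real.pi : ℂ) * Complex.I *
              ((p.1 : ℂ) * τ + L.bc (fun i => (p.2 i : ℂ)) z)))
        (Φ.toFun τ z - (2 * (k : ℂ) - (n₀ : ℂ)) * G2 τ * ψ.toFun τ z) := by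
  obtain ⟨v, c, h⟩ := L.exists_orthogonal
  refine ⟨ψ.raise h, fun τ hτ z => ?_⟩
  have e : (ψ.raise h).toFun τ z - (2 * (k : ℂ) - (n₀ : ℂ)) * G2 τ * ψ.toFun τ z =
      EvenLattice.heat v c ψ.fn (τ, z) := add_sub_cancel_right _ _
  rw [e]
  exact ψ.heat_hasSum h (q := (τ, z)) ⟨hτ, trivial⟩
end
end

section
/- Let N be a non-negative integer and f : ℍ → ℂ a holomorphic function satisfying f((aτ+b)/(cτ+d)) = (cτ+d)² f(τ) for all [[a,b],[c,d]] ∈ SL₂(ℤ), and suppose f admits a Fourier expansion f(τ) = Σ_{n ≥ −N} a(n) qⁿ, where q = exp(2πiτ), converging locally uniformly on ℍ. Then a(0) = 0, i.e., every nearly holomorphic modular form of weight 2 for SL₂(ℤ) has vanishing constant term. -/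
/-!
A holomorphic `f` on `ℍ` has a primitive `F`, and weight `2` means that `f(τ) dτ` is an invariant
differential: for `γ ∈ SL₂(ℤ)` the function `F ∘ γ - F` has derivative zero, hence is constant.
If `γ` has a fixed point in `ℍ`, this constant is `0`. This applies to `τ ↦ -1/τ` (fixing `i`) and
to `τ ↦ -1/(τ+1)` (fixing a primitive cube root of unity), and comparing the two gives
`F(τ + 1) = F(τ)`. On the other hand `F(i + 1) - F(i) = ∫₀¹ f(i + x) dx`, which is `a(0)` by termwise
integration of the Fourier expansion.

Termwise integration is dominated convergence: a convergent series in `ℂ` converges absolutely, and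
the absolute values of its terms are constant along the line `Im τ = 1`.
-/

open Complex

lemma isOpen_im_pos : IsOpen {τ : ℂ | 0 < τ.im} := isOpen_lt continuous_const continuous_im

lemma im_neg_inv_pos {w : ℂ} (hw : 0 < w.im) : 0 < (-1 / w).im := by
  have hne : w ≠ 0 := by rintro rfl; simp at hw
  have h := normSq_pos.mpr hne
  have : (-1 / w).im = w.im / normSq w := by
    rw [neg_div, one_div, neg_im, inv_im]; ring
  rw [this]
  positivity

/-- A primitive of a weight `2` form is invariant under `τ ↦ -1/(τ+D)`, provided that this map has
a fixed point `p` in the upper half-plane. -/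
lemma primitive_invariant (f F : ℂ → ℂ) (D : ℂ) (hD : D.im = 0)
    (hF : ∀ τ : ℂ, 0 < τ.im → HasDerivAt F (f τ) τ)
    (hf : ∀ τ : ℂ, 0 < τ.im → f (-1 / (τ + D)) = (τ + D) ^ 2 * f τ)
    (p : ℂ) (hp : 0 < p.im) (hfix : -1 / (p + D) = p) (τ : ℂ) (hτ : 0 < τ.im) :
    F (-1 / (τ + D)) = F τ := by
  have key : ∀ z : ℂ, 0 < z.im → HasDerivAt (fun z => F (-1 / (z + D)) - F z) 0 z := by
    intro z hz
    have him : 0 < (z + D).im := by simpa [hD] using hz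
    have hne : z + D ≠ 0 := by intro h; simp [h] at him
    have h1 : HasDerivAt (fun z : ℂ => -1 / (z + D)) (1 / (z + D) ^ 2) z := by
      have := (hasDerivAt_const z (-1 : ℂ)).fun_div ((hasDerivAt_id z).add_const D) hne
      simpa using this
    have h2 := ((hF _ (im_neg_inv_pos him)).comp z h1).sub (hF z hz)
    refine HasDerivAt.congr_deriv (f := fun z => F (-1 / (z + D)) - F z) h2 ?_
    rw [hf z hz]
    field_simp
    ring
  have hconn : IsPreconnected {τ : ℂ | 0 < τ.im} := (convex_halfSpace_im_gt 0).isPreconnected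
  have h := isOpen_im_pos.is_const_of_deriv_eq_zero hconn
    (fun z hz => (key z hz).differentiableAt.differentiableWithinAt)
    (fun z hz => (key z hz).deriv) hτ hp
  simp only [hfix, sub_self] at h
  exact sub_eq_zero.mp h

/-- Orthogonality of the characters `exp(2πi m x)` over a period, along the line `Im τ = 1`. -/
lemma integral_fourier_term (m : ℤ) (c : ℂ) :
    ∫ x in (0 : ℝ)..1, c * exp (2 * (Real.pi : ℂ) * I * (m : ℂ) * (I + x)) =
      if m = 0 then c else 0 := by
  split_ifs with h
  · simp [h]
  · have hne : 2 * (Real.pi : ℂ) * I * (m : ℂ) ≠ 0 := by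
      simp [Real.pi_ne_zero, h]
    have h1 : exp (2 * (Real.pi : ℂ) * I * (m : ℂ)) = 1 := by
      rw [← exp_int_mul_two_pi_mul_I m]; congr 1; ring
    simp_rw [mul_add, exp_add, ← mul_assoc]
    rw [intervalIntegral.integral_const_mul, integral_exp_mul_complex hne]
    simp [h1]

/-- a nearly holomorphic modular form of weight `2` for `SL₂(ℤ)`
has vanishing constant term. -/
theorem weight_two_constant_term_vanishes (N : ℕ) (f : ℂ → ℂ) (a : ℤ → ℂ)
    (hf : DifferentiableOn ℂ f {τ : ℂ | 0 < τ.im})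
    (hmod : ∀ A B C D : ℤ, A * D - B * C = 1 → ∀ τ : ℂ, 0 < τ.im →
      f (((A : ℂ) * τ + B) / ((C : ℂ) * τ + D)) = ((C : ℂ) * τ + D) ^ 2 * f τ)
    (hsupp : ∀ m : ℤ, m < -(N : ℤ) → a m = 0)
    (hexp : ∀ τ : ℂ, 0 < τ.im →
      HasSum (fun m : ℤ => a m * Complex.exp (2 * (Real.pi : ℂ) * Complex.I * (m : ℂ) * τ))
        (f τ)) :
    a 0 = 0 := by
  obtain ⟨F, hF'⟩ := (convex_halfSpace_im_gt 0).exists_forall_hasDerivWithinAt hf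
  have hF : ∀ τ : ℂ, 0 < τ.im → HasDerivAt F (f τ) τ := fun τ hτ =>
    (hF' τ hτ).hasDerivAt (isOpen_im_pos.mem_nhds hτ)
  have hS : F (-1 / (I + 1)) = F (I + 1) := by
    simpa using primitive_invariant f F 0 (by simp) hF
      (fun τ hτ => by simpa using hmod 0 (-1) 1 0 (by norm_num) τ hτ)
      I (by simp) (by simp [neg_div]) (I + 1) (by simp)
  have hU : F (-1 / (I + 1)) = F I := by
    have hs : ((√3 : ℝ) : ℂ) ^ 2 = 3 := by
      rw [← ofReal_pow, Real.sq_sqrt (by norm_num)]; norm_num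
    have him : 0 < (-1 / 2 + (√3 : ℝ) / 2 * I : ℂ).im := by
      simp
    refine primitive_invariant f F 1 (by simp) hF
      (fun τ hτ => by simpa using hmod 0 (-1) 1 1 (by norm_num) τ hτ)
      (-1 / 2 + (√3 : ℝ) / 2 * I) him ?_ I (by simp)
    have hne : (-1 / 2 + (√3 : ℝ) / 2 * I + 1 : ℂ) ≠ 0 := by
      intro h
      have := congrArg Complex.re h
      norm_num at this
    rw [div_eq_iff hne]
    linear_combination (-1 / 4 : ℂ) * I ^ 2 * hs - (3 / 4 : ℂ) * I_sq
  have him : ∀ x : ℝ, 0 < (I + x : ℂ).im := fun x => by simp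
  have hline : ∀ x : ℝ, HasDerivAt (fun x : ℝ => F (I + x)) (f (I + x)) x := fun x => by
    simpa using! (hF _ (him x)).comp_of_eq x ((hasDerivAt_id x).ofReal_comp.const_add I) rfl
  have hcont : Continuous fun x : ℝ => f (I + x) :=
    hf.continuousOn.comp_continuous (by fun_prop) him
  have hint : ∫ x in (0 : ℝ)..1, f (I + x) = 0 := by
    rw [intervalIntegral.integral_eq_sub_of_hasDerivAt (fun x _ => hline x)
      (hcont.intervalIntegrable 0 1)]
    simp [← hS, ← hU]
  have hnorm : ∀ (m : ℤ) (x : ℝ), ‖a m * exp (2 * (Real.pi : ℂ) * I * (m : ℂ) * (I + x))‖ =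
      ‖a m * exp (2 * (Real.pi : ℂ) * I * (m : ℂ) * I)‖ := fun m x => by
    simp [norm_exp]
  have hsum : HasSum (fun m : ℤ =>
      ∫ x in (0 : ℝ)..1, a m * exp (2 * (Real.pi : ℂ) * I * (m : ℂ) * (I + x)))
      (∫ x in (0 : ℝ)..1, f (I + x)) := by
    refine intervalIntegral.hasSum_integral_of_dominated_convergence
      (fun m _ => ‖a m * exp (2 * (Real.pi : ℂ) * I * (m : ℂ) * I)‖)
      (fun m => (by fun_prop : Continuous _).aestronglyMeasurable)
      (fun m => .of_forall fun x _ => (hnorm m x).le)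
      (.of_forall fun x _ => (hexp I (by simp)).summable.norm)
      (by simp) (.of_forall fun x _ => hexp _ (him x))
  simp_rw [integral_fourier_term, hint] at hsum
  have h0 := hasSum_single (f := fun m : ℤ => if m = 0 then a m else 0) 0
    (fun m hm => if_neg hm)
  simpa using h0.unique hsum
end
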